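/- For every set system S ⊆ 2^[n], HHdim(S) equals the maximum integer k for which there exist k distinct indices j₁,...,j_k ∈ [n] and k sets S₁,...,S_k ∈ S such that for all l, m ∈ {1,...,k}, one has j_l ∈ S_m if and only if l = m (equivalently, the maximum size of a submatrix of the incidence matrix of S that is a permutation matrix); here the maximum over the empty collection is 0. -/

import Mathlib

/-!
The sets of a family that single out the heavy hitters of `v` contain no other heavy hitter, since
heavy hitters lie in the support of `v`; so heavy hitters and their witnesses span a permutation
submatrix. Conversely, the indicator vector of the columns of a permutation submatrix has exactly
these columns as heavy hitters.
-/

/-- The support of a vector `v`: the set of its non-zero coordinates. -/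
def vecSupp {α : Type*} (v : α → ℝ) : Set α := {i | v i ≠ 0}

/-- The set of heavy hitters of `v` induced by the set system `S`:
indices `i` such that some member `s ∈ S` satisfies `supp(v) ∩ s = {i}`. -/
def HHset {α : Type*} (S : Set (Set α)) (v : α → ℝ) : Set α :=
  {i | ∃ s ∈ S, vecSupp v ∩ s = {i}}

/-- The heavy-hitter dimension of a set system: the supremum over vectors `v`
of the number of heavy hitters induced by `S`. -/
noncomputable def HHdim {α : Type*} (S : Set (Set α)) : ℕ :=
  sSup {k | ∃ v : α → ℝ, (HHset S v).ncard = k}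

section

variable {α : Type*}

/-- The incidence matrix of `S` has a `k × k` submatrix that is a permutation matrix. The columns
`j` and the rows `T` are indexed so that this permutation is the identity. -/
def HasPermutationSubmatrix (S : Set (Set α)) (k : ℕ) : Prop :=
  ∃ (j : Fin k → α) (T : Fin k → Set α),
    Function.Injective j ∧ (∀ m, T m ∈ S) ∧ ∀ l m, j l ∈ T m ↔ l = m

theorem vecSupp_indicator_one (s : Set α) : vecSupp (s.indicator 1) = s :=
  Set.support_indicator.trans (by simp)

theorem HHset_subset_vecSupp (S : Set (Set α)) (v : α → ℝ) : HHset S v ⊆ vecSupp v := by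
  rintro i ⟨s, -, hs⟩
  exact (hs.ge rfl).1

theorem exists_separating_family_HHset (S : Set (Set α)) (v : α → ℝ) :
    ∃ T : HHset S v → Set α, (∀ i, T i ∈ S) ∧ ∀ i j : HHset S v, ↑i ∈ T j ↔ i = j := by
  choose T hTS hT using fun i : HHset S v => i.2
  refine ⟨T, hTS, fun i j => ⟨fun hij => ?_, ?_⟩⟩
  · exact Subtype.ext ((hT j).le ⟨HHset_subset_vecSupp S v i.2, hij⟩)
  · rintro rfl
    exact ((hT i).ge rfl).2

theorem HHset_indicator_range {S : Set (Set α)} {ι : Type*} {j : ι → α} {T : ι → Set α}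
    (hTS : ∀ m, T m ∈ S) (hjT : ∀ l m, j l ∈ T m ↔ l = m) :
    HHset S ((Set.range j).indicator 1) = Set.range j := by
  have hsupp := vecSupp_indicator_one (Set.range j)
  apply Set.Subset.antisymm
  · exact (HHset_subset_vecSupp S _).trans hsupp.le
  · rintro _ ⟨m, rfl⟩
    refine ⟨T m, hTS m, ?_⟩
    rw [hsupp]
    apply Set.Subset.antisymm
    · rintro _ ⟨⟨l, rfl⟩, hl⟩
      exact congrArg j ((hjT l m).1 hl)
    · exact Set.singleton_subset_iff.2 ⟨⟨m, rfl⟩, (hjT m m).2 rfl⟩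

theorem hasPermutationSubmatrix_of_le_encard_HHset {S : Set (Set α)} {v : α → ℝ} {k : ℕ}
    (hk : k ≤ (HHset S v).encard) : HasPermutationSubmatrix S k := by
  obtain ⟨T, hTS, hT⟩ := exists_separating_family_HHset S v
  obtain ⟨e, -⟩ : ∃ e : Fin k ↪ HHset S v, Disjoint ∅ (Set.range e) :=
    Fin.Embedding.exists_embedding_disjoint_range_of_add_le_ENat_card (by simpa using hk)
  exact ⟨fun l => e l, fun m => T (e m), Subtype.val_injective.comp e.injective,
    fun m => hTS (e m), fun l m => (hT (e l) (e m)).trans e.injective.eq_iff⟩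

theorem HasPermutationSubmatrix.exists_encard_HHset_eq {S : Set (Set α)} {k : ℕ}
    (hk : HasPermutationSubmatrix S k) : ∃ v : α → ℝ, (HHset S v).encard = k := by
  obtain ⟨j, T, hj, hTS, hjT⟩ := hk
  refine ⟨(Set.range j).indicator 1, ?_⟩
  rw [HHset_indicator_range hTS hjT, ← Set.image_univ, hj.encard_image, Set.encard_univ]
  simp

theorem exists_ncard_HHset_eq_iff {S : Set (Set α)} {k : ℕ} :
    (∃ v : α → ℝ, (HHset S v).ncard = k) ↔ HasPermutationSubmatrix S k := by
  constructor
  · rintro ⟨v, rfl⟩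
    exact hasPermutationSubmatrix_of_le_encard_HHset (Set.ncard_le_encard _)
  · intro hk
    obtain ⟨v, hv⟩ := hk.exists_encard_HHset_eq
    exact ⟨v, by rw [Set.ncard_def, hv, ENat.toNat_natCast]⟩

theorem HHdim_eq_sSup_hasPermutationSubmatrix (S : Set (Set α)) :
    HHdim S = sSup {k | HasPermutationSubmatrix S k} := by
  simp only [HHdim, exists_ncard_HHset_eq_iff]

theorem hasPermutationSubmatrix_zero (S : Set (Set α)) : HasPermutationSubmatrix S 0 :=
  hasPermutationSubmatrix_of_le_encard_HHset (v := 0) zero_le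

theorem bddAbove_hasPermutationSubmatrix [Finite α] (S : Set (Set α)) :
    BddAbove {k | HasPermutationSubmatrix S k} := by
  refine ⟨Nat.card α, ?_⟩
  rintro k ⟨j, -, hj, -⟩
  simpa using Nat.card_le_card_of_injective j hj

theorem HHdim_eq_max_permutation_submatrix_general {S : Set (Set α)}
    (hS : BddAbove {k | HasPermutationSubmatrix S k}) :
    IsGreatest {k | HasPermutationSubmatrix S k} (HHdim S) := by
  rw [HHdim_eq_sSup_hasPermutationSubmatrix]
  exact ⟨Nat.sSup_mem ⟨0, hasPermutationSubmatrix_zero S⟩ hS, fun _ hk => le_csSup hS hk⟩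

end

/-- `HHdim S` equals the maximum `k` for which there are `k` distinct
indices `j₁,…,j_k` and sets `T₁,…,T_k ∈ S` with `j_l ∈ T_m ↔ l = m`
(a permutation submatrix of the incidence matrix); the maximum over the empty
collection is `0`. -/
theorem HHdim_eq_max_permutation_submatrix {n : ℕ} (S : Set (Set (Fin n))) :
    HHdim S = sSup {k : ℕ | ∃ (j : Fin k → Fin n) (T : Fin k → Set (Fin n)),
      Function.Injective j ∧ (∀ m, T m ∈ S) ∧ ∀ l m, j l ∈ T m ↔ l = m} :=
  (HHdim_eq_max_permutation_submatrix_general (bddAbove_hasPermutationSubmatrix S)).csSup_eq.symm
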